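/- Let s ≥ 3 and e ≥ 2 be integers. In R(3,2^e−2)^{⊗s}, the element (z_{2,1}^{2^{e+1}−1} · z_{2,2}^{2^{e+1}−2} · z_{2,3}^{2^e−1}) · (z_{3,1}^{2^e−1} · z_{3,2}^{2^e−1} · z_{3,3}^{2^{e+1}−3}) · ∏_{i=4}^{s} (z_{i,1}^{2^e} · z_{i,2}^{2^e−1} · z_{i,3}^{2^e−2}) is nonzero (the product over 4 ≤ i ≤ s being empty if s = 3). Moreover, for s = 3 this element equals the top basis element ∏_{i=1}^{3} x_{i,1}^{2^e} · x_{i,2}^{2^e−1} · x_{i,3}^{2^e−2}. -/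

import Mathlib

/-!
Write `q = 2^e`, so that `R = R(3, q - 2)` has generators `x, y, z` with `h_{q+1}(x) = 0`,
`h_q(x, y) = 0` and `h_{q-1}(x, y, z) = 0`. The product is shown to equal
`∏ x_{i,1}^q x_{i,2}^{q-1} x_{i,3}^{q-2}` for every `s ≥ 3`, and the latter to be nonzero.

*Relations in `R`.* In characteristic two, `(y + z) h_{q-1}(x, y, z) = h_q(x, y) + h_q(x, z)` and
`(x + y) h_q(x, y) = x^{q+1} + y^{q+1}`, so `h_q(x, z)`, `y^{q+1}` and `z^{q+1}` vanish as well.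
Multiplying these relations by suitable monomials gives `x^q y^q = 0`, `x^q y^{q-1} z^{q-1} = 0`, and
shows that permuting the exponents of the top monomial `T = x^q y^{q-1} z^{q-2}` does not change it.
The identities that are needed are collected in `FlagRel`.

*Three factors* (`first_blocks_eq`). Let `a, b, c` be the generators in the first three tensor
factors. As `(a + b)^q = a^q + b^q`, the powers with exponent above `q` have only two terms, for
instance `(a + b)^{2q-1} = a^q b^{q-1} + b^q a^{q-1}`. Hence the block of the second factor is
`P = (a₁^q a₂^{q-2} a₃ + a₁^{q-1} a₂^q) T(b)` plus terms of higher degree in the `a`'s. Now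
`P a₁ = P a₃^q = P a₃^{q-3} a₂² = 0` and `P a₃^{q-3} a₂ = T(a) T(b)`, so that the block of the
third factor contributes only `a₃^{q-3} a₂ · c₁^{q-1} c₂^{q-2} c₃^q = a₃^{q-3} a₂ · T(c)`.

*More factors* (`FlagRel.block_product_eq`). Each `x_{1,j}` annihilates the top monomial of the first
factor, so `z_{i,j}` acts as `x_{i,j}` in the remaining blocks.

*Nonvanishing* (`top_ne_zero`, `prod_single_ne_zero`). Each `h_d` is monic in its last variable, so
`R` maps to a tower of three monic extensions of `ZMod 2`, of degrees `q + 1`, `q` and `q - 1`, where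
the top monomial is the product of the highest basis powers. Over a field, tensor powers of a nonzero
vector are nonzero.
-/

open scoped TensorProduct

/-- Complete homogeneous symmetric polynomial of degree `d` in a list of elements
of a commutative (semi)ring: `h_d(l)`. -/
noncomputable def completeHomog {R : Type*} [CommSemiring R] : List R → ℕ → R
  | [], 0 => 1
  | [], _ + 1 => 0
  | x :: l, d => ∑ t ∈ Finset.range (d + 1), x ^ t * completeHomog l (d - t)

/-- Elementary symmetric polynomial of degree `d` in a list of elements: `e_d(l)`. -/
noncomputable def elemSymm {R : Type*} [CommSemiring R] : List R → ℕ → R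
  | _, 0 => 1
  | [], _ + 1 => 0
  | x :: l, d + 1 => elemSymm l (d + 1) + x * elemSymm l d

/-- The ideal of `(ZMod 2)[x_1, …, x_k]` generated by the complete homogeneous
symmetric polynomials `h_{m+i}(x_1, …, x_{k+1-i})` for `1 ≤ i ≤ k`. -/
noncomputable def flagIdeal (k m : ℕ) : Ideal (MvPolynomial (Fin k) (ZMod 2)) :=
  Ideal.span { p | ∃ i : ℕ, 1 ≤ i ∧ i ≤ k ∧
    p = completeHomog (((List.finRange k).take (k + 1 - i)).map MvPolynomial.X) (m + i) }

/-- `R(k,m)`, the quotient of `(ZMod 2)[x_1, …, x_k]` by `flagIdeal k m`;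
this is the mod-2 cohomology ring of the real flag manifold `F(1^k, m)`. -/
abbrev FlagRing (k m : ℕ) : Type :=
  MvPolynomial (Fin k) (ZMod 2) ⧸ flagIdeal k m

/-- The image of the variable `x_{j+1}` in `R(k,m)` (`j` is 0-indexed). -/
noncomputable def xGen (k m : ℕ) (j : Fin k) : FlagRing k m :=
  Ideal.Quotient.mk (flagIdeal k m) (MvPolynomial.X j)

/-- The zero-divisor `z_{j+1} = x_{j+1} ⊗ 1 + 1 ⊗ x_{j+1}` in `R(k,m) ⊗ R(k,m)`. -/
noncomputable def zGen (k m : ℕ) (j : Fin k) :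
    FlagRing k m ⊗[ZMod 2] FlagRing k m :=
  xGen k m j ⊗ₜ 1 + 1 ⊗ₜ xGen k m j

/-- `x_{i+1,j+1}` in the `s`-fold tensor power `R(k,m)^{⊗ s}`: the element having
`x_{j+1}` in the `(i+1)`-st tensor factor and `1` elsewhere (`i`, `j` 0-indexed). -/
noncomputable def xT (k m s : ℕ) (i : Fin s) (j : Fin k) :
    ⨂[ZMod 2] _ : Fin s, FlagRing k m :=
  PiTensorProduct.tprod (ZMod 2) (fun t => if t = i then xGen k m j else 1)

/-- The `s`-th zero-divisor `z_{i+1,j+1} = x_{1,j+1} + x_{i+1,j+1}` in `R(k,m)^{⊗ s}`. -/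
noncomputable def zT (k m s : ℕ) (hs : 0 < s) (i : Fin s) (j : Fin k) :
    ⨂[ZMod 2] _ : Fin s, FlagRing k m :=
  xT k m s ⟨0, hs⟩ j + xT k m s i j

/-! ### Complete homogeneous polynomials -/

theorem completeHomog_zero {A : Type*} [CommRing A] (l : List A) :
    completeHomog l 0 = 1 := by
  induction l with
  | nil => rfl
  | cons x l ih => simp [completeHomog, ih]

/-- The recursion `h_{d+1}(x, l) = h_{d+1}(l) + x h_d(x, l)`. -/
theorem completeHomog_cons_succ {A : Type*} [CommRing A] (x : A) (l : List A) (d : ℕ) :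
    completeHomog (x :: l) (d + 1)
      = completeHomog l (d + 1) + x * completeHomog (x :: l) d := by
  simp only [completeHomog]
  rw [Finset.sum_range_succ', Finset.mul_sum, add_comm]
  congr 1
  · simp
  · refine Finset.sum_congr rfl fun t _ => ?_
    rw [Nat.add_sub_add_right]
    ring

theorem completeHomog_singleton {A : Type*} [CommRing A] (x : A) (d : ℕ) :
    completeHomog [x] d = x ^ d := by
  induction d with
  | zero => simp [completeHomog_zero]
  | succ d ih => rw [completeHomog_cons_succ, ih]; simp [completeHomog, pow_succ']

theorem map_completeHomog {A B : Type*} [CommRing A] [CommRing B] (f : A →+* B)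
    (l : List A) (d : ℕ) : f (completeHomog l d) = completeHomog (l.map f) d := by
  induction l generalizing d with
  | nil => cases d <;> simp [completeHomog]
  | cons x l ih => simp [completeHomog, map_sum, ih]

/-- In characteristic two, `(x + y) h_d(x, y) = x^{d+1} + y^{d+1}`. -/
theorem add_mul_completeHomog_pair {A : Type*} [CommRing A] (h2 : (2 : A) = 0)
    (x y : A) (d : ℕ) :
    (x + y) * completeHomog [x, y] d = x ^ (d + 1) + y ^ (d + 1) := by
  induction d with
  | zero => simp [completeHomog_zero]
  | succ d ih =>
    rw [completeHomog_cons_succ, completeHomog_singleton]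
    linear_combination x * ih + x * y ^ (d + 1) * h2

/-- In characteristic two, `(y + z) h_d(x, y, z) = h_{d+1}(x, y) + h_{d+1}(x, z)`. -/
theorem add_mul_completeHomog_triple {A : Type*} [CommRing A] (h2 : (2 : A) = 0)
    (x y z : A) (d : ℕ) :
    (y + z) * completeHomog [x, y, z] d
      = completeHomog [x, y] (d + 1) + completeHomog [x, z] (d + 1) := by
  induction d with
  | zero =>
    rw [completeHomog_cons_succ x [y], completeHomog_cons_succ x [z], completeHomog_singleton,
      completeHomog_singleton, completeHomog_zero, completeHomog_zero, completeHomog_zero]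
    linear_combination (-x) * h2
  | succ d ih =>
    rw [completeHomog_cons_succ x [y, z], completeHomog_cons_succ x [y],
      completeHomog_cons_succ x [z], completeHomog_singleton, completeHomog_singleton]
    linear_combination x * ih + add_mul_completeHomog_pair h2 y z (d + 1)

/-! ### Monomial identities in `R(3, r + 1)` -/

/-- The monomial identities, with `q = r + 3`, satisfied by the three generators `x, y, z` of
`R(3, q - 2)`. Those whose right-hand side is not zero identify further monomials of top degree
with the top basis element `x^q y^{q-1} z^{q-2}`. -/
structure FlagRel {A : Type*} [CommRing A] (r : ℕ) (x y z : A) : Prop where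
  x_pow : x ^ (r + 4) = 0
  y_pow : y ^ (r + 4) = 0
  z_pow : z ^ (r + 4) = 0
  xy : x ^ (r + 3) * y ^ (r + 3) = 0
  xyz : x ^ (r + 3) * y ^ (r + 2) * z ^ (r + 2) = 0
  yxz : x ^ (r + 2) * y ^ (r + 3) * z ^ (r + 2) = 0
  zxy : x ^ (r + 2) * y ^ (r + 2) * z ^ (r + 3) = 0
  top_yxz : x ^ (r + 2) * y ^ (r + 3) * z ^ (r + 1) = x ^ (r + 3) * y ^ (r + 2) * z ^ (r + 1)
  top_xzy : x ^ (r + 3) * y ^ (r + 1) * z ^ (r + 2) = x ^ (r + 3) * y ^ (r + 2) * z ^ (r + 1)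
  top_zxy : x ^ (r + 2) * y ^ (r + 1) * z ^ (r + 3) = x ^ (r + 3) * y ^ (r + 2) * z ^ (r + 1)

theorem FlagRel.map {A B : Type*} [CommRing A] [CommRing B] (f : A →+* B) {r : ℕ} {x y z : A}
    (h : FlagRel r x y z) : FlagRel r (f x) (f y) (f z) := by
  obtain ⟨h1, h2, h3, h4, h5, h6, h7, h8, h9, h10⟩ := h
  constructor <;> simp only [← map_pow, ← map_mul, *, map_zero]

/-- Multiplying `h_q(x, y) = 0` by powers of `x`, where `x^{q+1} = 0`, kills `x^q y^q` and
exchanges the exponents `q` and `q - 1`. -/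
theorem pair_relations {A : Type*} [CommRing A] (h2 : (2 : A) = 0) (r : ℕ) (x y : A)
    (hx : x ^ (r + 4) = 0) (hxy : completeHomog [x, y] (r + 3) = 0) :
    y ^ (r + 4) = 0 ∧ x ^ (r + 3) * y ^ (r + 3) = 0 ∧
      x ^ (r + 2) * y ^ (r + 3) = x ^ (r + 3) * y ^ (r + 2) := by
  have e1 := completeHomog_cons_succ x [y] (r + 2)
  have e2 := completeHomog_cons_succ x [y] (r + 1)
  rw [completeHomog_singleton] at e1 e2
  rw [hxy] at e1
  refine ⟨?_, ?_, ?_⟩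
  · have := add_mul_completeHomog_pair h2 x y (r + 3)
    rw [hxy] at this
    linear_combination -this - hx
  · linear_combination (-x ^ (r + 3)) * e1 - completeHomog [x, y] (r + 2) * hx
  · linear_combination (-x ^ (r + 2)) * e1 - x ^ (r + 3) * e2
      - completeHomog [x, y] (r + 1) * hx - x ^ (r + 3) * y ^ (r + 2) * h2

theorem flagRel_of_completeHomog {A : Type*} [CommRing A] (h2 : (2 : A) = 0) (r : ℕ) (x y z : A)
    (hx : completeHomog [x] (r + 4) = 0) (hxy : completeHomog [x, y] (r + 3) = 0)
    (hxyz : completeHomog [x, y, z] (r + 2) = 0) : FlagRel r x y z := by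
  rw [completeHomog_singleton] at hx
  have hxz : completeHomog [x, z] (r + 3) = 0 := by
    have := add_mul_completeHomog_triple h2 x y z (r + 2)
    rw [hxyz, hxy] at this
    linear_combination -this
  obtain ⟨hy, pxy, sxy⟩ := pair_relations h2 r x y hx hxy
  obtain ⟨hz, pxz, sxz⟩ := pair_relations h2 r x z hx hxz
  -- Multiplying `h_{q-1}(x, y, z) = 0` by `x^q` leaves `x^q h_{q-1}(y, z) = 0`.
  have hyz : x ^ (r + 3) * completeHomog [y, z] (r + 2) = 0 := by
    have e := completeHomog_cons_succ x [y, z] (r + 1)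
    rw [hxyz] at e
    linear_combination (-x ^ (r + 3)) * e - completeHomog [x, y, z] (r + 1) * hx
  have e1 := completeHomog_cons_succ y [z] (r + 1)
  have e2 := completeHomog_cons_succ y [z] r
  rw [completeHomog_singleton] at e1 e2
  have xyz : x ^ (r + 3) * y ^ (r + 2) * z ^ (r + 2) = 0 := by
    linear_combination y ^ (r + 2) * hyz - x ^ (r + 3) * y ^ (r + 2) * e1
      - completeHomog [y, z] (r + 1) * pxy
  have top : x ^ (r + 3) * y ^ (r + 1) * z ^ (r + 2)
      = x ^ (r + 3) * y ^ (r + 2) * z ^ (r + 1) := by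
    linear_combination y ^ (r + 1) * hyz - x ^ (r + 3) * y ^ (r + 1) * e1
      - x ^ (r + 3) * y ^ (r + 2) * e2 - completeHomog [y, z] r * pxy
      - x ^ (r + 3) * y ^ (r + 2) * z ^ (r + 1) * h2
  exact
    { x_pow := hx
      y_pow := hy
      z_pow := hz
      xy := pxy
      xyz := xyz
      yxz := by linear_combination z ^ (r + 2) * sxy + xyz
      zxy := by linear_combination y ^ (r + 2) * sxz + xyz
      top_yxz := by linear_combination z ^ (r + 1) * sxy
      top_xzy := top
      top_zxy := by linear_combination y ^ (r + 1) * sxz + top }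

/-! ### The product of the first two blocks -/

theorem add_pow_two_pow_of_two_eq_zero {A : Type*} [CommRing A] (h2 : (2 : A) = 0) (a b : A)
    (e : ℕ) : (a + b) ^ 2 ^ e = a ^ 2 ^ e + b ^ 2 ^ e := by
  induction e with
  | zero => simp
  | succ e ih =>
    rw [pow_succ, pow_mul, ih, pow_mul, pow_mul]
    linear_combination a ^ 2 ^ e * b ^ 2 ^ e * h2

theorem mul_add_pow_of_mul_eq_zero {A : Type*} [CommRing A] {w a : A} (h : w * a = 0) (b : A)
    (n : ℕ) : w * (a + b) ^ n = w * b ^ n := by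
  induction n with
  | zero => simp
  | succ n ih => linear_combination (a + b) * ih + b ^ n * h

/-- The binomial expansion modulo `a ^ 2`; the coefficient `n + 1` of `a b^n` is odd. -/
theorem exists_add_pow_eq {A : Type*} [CommRing A] (h2 : (2 : A) = 0) (a b : A) {n : ℕ}
    (hn : Even n) : ∃ W, (a + b) ^ (n + 1) = b ^ (n + 1) + a * b ^ n + a ^ 2 * W := by
  obtain ⟨k, rfl⟩ := hn
  obtain ⟨W, hW⟩ := Polynomial.powAddExpansion b a (k + k + 1)
  refine ⟨W, ?_⟩
  rw [add_comm a b, hW]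
  rw [Nat.add_sub_cancel]
  push_cast
  linear_combination b ^ (k + k) * a * k * h2

/-- For `q = 2^e` and `a^{q+1} = b^{q+1} = 0`: in `(a^q + b^q) (a + b)^n`, each of `a^q` and `b^q`
meets only the pure power of the other variable. -/
theorem add_pow_eq_of_pow_eq_zero {A : Type*} [CommRing A] (h2 : (2 : A) = 0) {a b : A}
    {q e : ℕ} (hq : q = 2 ^ e) (ha : a ^ (q + 1) = 0) (hb : b ^ (q + 1) = 0) (n : ℕ) :
    (a + b) ^ (q + n) = a ^ q * b ^ n + b ^ q * a ^ n := by
  have hab : (a + b) ^ q = a ^ q + b ^ q := by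
    rw [hq]; exact add_pow_two_pow_of_two_eq_zero h2 a b e
  rw [pow_add, hab, add_mul, mul_add_pow_of_mul_eq_zero (by rw [← pow_succ, ha]) b,
    add_comm a b, mul_add_pow_of_mul_eq_zero (by rw [← pow_succ, hb]) a]

/-- The identity behind the case `s = 3`, with `q = r + 3 = 2^e`. -/
theorem first_blocks_eq {A : Type*} [CommRing A] (h2 : (2 : A) = 0) {r e : ℕ}
    (hr : r + 3 = 2 ^ e) (hodd : Even (r + 1)) {a₁ a₂ a₃ b₁ b₂ b₃ c₁ c₂ c₃ : A}
    (ha : FlagRel r a₁ a₂ a₃) (hb : FlagRel r b₁ b₂ b₃) (hc : FlagRel r c₁ c₂ c₃) :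
    ((a₁ + b₁) ^ (2 * r + 5) * (a₂ + b₂) ^ (2 * r + 4) * (a₃ + b₃) ^ (r + 2)) *
      ((a₁ + c₁) ^ (r + 2) * (a₂ + c₂) ^ (r + 2) * (a₃ + c₃) ^ (2 * r + 3))
    = (a₁ ^ (r + 3) * a₂ ^ (r + 2) * a₃ ^ (r + 1)) *
      (b₁ ^ (r + 3) * b₂ ^ (r + 2) * b₃ ^ (r + 1)) *
      (c₁ ^ (r + 3) * c₂ ^ (r + 2) * c₃ ^ (r + 1)) := by
  have p1 : (a₁ + b₁) ^ (2 * r + 5)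
      = a₁ ^ (r + 3) * b₁ ^ (r + 2) + b₁ ^ (r + 3) * a₁ ^ (r + 2) := by
    rw [← add_pow_eq_of_pow_eq_zero h2 hr ha.x_pow hb.x_pow]; congr 1; omega
  have p2 : (a₂ + b₂) ^ (2 * r + 4)
      = a₂ ^ (r + 3) * b₂ ^ (r + 1) + b₂ ^ (r + 3) * a₂ ^ (r + 1) := by
    rw [← add_pow_eq_of_pow_eq_zero h2 hr ha.y_pow hb.y_pow]; congr 1; omega
  have p3 : (a₃ + c₃) ^ (2 * r + 3)
      = a₃ ^ (r + 3) * c₃ ^ r + c₃ ^ (r + 3) * a₃ ^ r := by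
    rw [← add_pow_eq_of_pow_eq_zero h2 hr ha.z_pow hc.z_pow]; congr 1; omega
  obtain ⟨W, hW⟩ := exists_add_pow_eq h2 a₃ b₃ hodd
  obtain ⟨V, hV⟩ := exists_add_pow_eq h2 a₂ c₂ hodd
  set T := b₁ ^ (r + 3) * b₂ ^ (r + 2) * b₃ ^ (r + 1) with hT
  -- The block of the second factor, up to terms of higher degree in the `a`'s.
  obtain ⟨U, U₂, hP⟩ : ∃ U U₂, (a₁ + b₁) ^ (2 * r + 5) * (a₂ + b₂) ^ (2 * r + 4) *
      (a₃ + b₃) ^ (r + 2)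
      = a₁ ^ (r + 3) * a₂ ^ (r + 1) * a₃ * T + a₁ ^ (r + 2) * a₂ ^ (r + 3) * T
        + a₁ ^ (r + 3) * a₂ ^ (r + 1) * a₃ ^ 2 * U
        + a₁ ^ (r + 2) * a₂ ^ (r + 3) * a₃ * U₂ := by
    refine ⟨b₁ ^ (r + 2) * b₂ ^ (r + 3) * W,
      b₁ ^ (r + 3) * b₂ ^ (r + 1) * (b₃ ^ (r + 1) + a₃ * W), ?_⟩
    rw [p1, p2, hW, hT]
    linear_combination
      (b₁ ^ (r + 2) * b₂ ^ (r + 1) * (b₃ ^ (r + 2) + a₃ * b₃ ^ (r + 1) + a₃ ^ 2 * W)) * ha.xy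
      + (a₁ ^ (r + 2) * a₂ ^ (r + 1) * (b₃ ^ (r + 2) + a₃ * b₃ ^ (r + 1) + a₃ ^ 2 * W)) * hb.xy
      + a₁ ^ (r + 3) * a₂ ^ (r + 1) * hb.yxz
      + a₁ ^ (r + 3) * a₂ ^ (r + 1) * a₃ * hb.top_yxz
      + a₁ ^ (r + 2) * a₂ ^ (r + 3) * hb.top_xzy
  rw [hP, p3]
  set P := a₁ ^ (r + 3) * a₂ ^ (r + 1) * a₃ * T + a₁ ^ (r + 2) * a₂ ^ (r + 3) * T
        + a₁ ^ (r + 3) * a₂ ^ (r + 1) * a₃ ^ 2 * U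
        + a₁ ^ (r + 2) * a₂ ^ (r + 3) * a₃ * U₂ with hPdef
  -- Multiplication by `a₁`, by `a₂ ^ 2 * a₃ ^ (q - 3)` or by `a₃ ^ q` annihilates `P`, which leaves
  -- a single term of the second block.
  have k1 : P * a₁ = 0 := by
    rw [hPdef]
    linear_combination (a₂ ^ (r + 1) * a₃ * T + a₂ ^ (r + 1) * a₃ ^ 2 * U) * ha.x_pow
      + (T + a₃ * U₂) * ha.xy
  have k3 : P * a₃ ^ (r + 3) = 0 := by
    rw [hPdef]
    linear_combination (a₁ ^ (r + 3) * a₂ ^ (r + 1) * (T + a₃ * U)) * ha.z_pow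
      + (a₃ * T + a₃ ^ 2 * U₂) * ha.yxz
  have k2 : P * a₃ ^ r * a₂
      = a₁ ^ (r + 3) * a₂ ^ (r + 2) * a₃ ^ (r + 1) * T := by
    rw [hPdef]
    linear_combination U * ha.xyz
      + (a₁ ^ (r + 2) * a₃ ^ r * T + a₁ ^ (r + 2) * a₃ ^ (r + 1) * U₂) * ha.y_pow
  have k22 : P * a₃ ^ r * a₂ ^ 2 = 0 := by
    linear_combination a₂ * k2 + a₃ ^ (r + 1) * T * ha.xy
  have k4 := mul_add_pow_of_mul_eq_zero k1 c₁ (r + 2)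
  rw [hV]
  clear_value P T
  linear_combination (c₂ ^ (r + 2) + a₂ * c₂ ^ (r + 1) + a₂ ^ 2 * V)
      * (a₃ ^ (r + 3) * c₃ ^ r + c₃ ^ (r + 3) * a₃ ^ r) * k4
    + c₁ ^ (r + 2) * (c₂ ^ (r + 2) + a₂ * c₂ ^ (r + 1) + a₂ ^ 2 * V) * c₃ ^ r * k3
    + c₁ ^ (r + 2) * c₃ ^ (r + 3) * (c₂ ^ (r + 1) * k2 + V * k22)
    + P * a₃ ^ r * hc.zxy
    + a₁ ^ (r + 3) * a₂ ^ (r + 2) * a₃ ^ (r + 1) * T * hc.top_zxy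
/-! ### The top monomial is nonzero -/

open Polynomial (C X C_pow degree_eq_natDegree degree_sum_le
  natDegree_add_eq_right_of_degree_lt) in
/-- `h_d(l, X)` is a monic polynomial of degree `d` in its last variable. -/
theorem completeHomog_monic {A : Type*} [CommRing A] [Nontrivial A] (l : List A) (d : ℕ) :
    (completeHomog (l.map C ++ [X]) d).Monic ∧
      (completeHomog (l.map C ++ [X]) d).natDegree = d := by
  induction l generalizing d with
  | nil => simp [completeHomog_singleton]
  | cons x l ih =>
    have key : completeHomog ((x :: l).map C ++ [X]) d
        = (∑ t ∈ Finset.range d, C x ^ (t + 1) * completeHomog (l.map C ++ [X]) (d - (t + 1)))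
          + completeHomog (l.map C ++ [X]) d := by
      simp only [List.map_cons, List.cons_append, completeHomog]
      rw [Finset.sum_range_succ']
      simp
    have hlt : (∑ t ∈ Finset.range d,
        C x ^ (t + 1) * completeHomog (l.map C ++ [X]) (d - (t + 1))).degree
          < (completeHomog (l.map C ++ [X]) d).degree := by
      rw [degree_eq_natDegree (ih d).1.ne_zero, (ih d).2]
      refine (degree_sum_le _ _).trans_lt ?_
      refine (Finset.sup_lt_iff (WithBot.bot_lt_coe d)).mpr fun t ht => ?_
      rw [← C_pow, ← Polynomial.smul_eq_C_mul]
      refine (Polynomial.degree_smul_le _ _).trans_lt ?_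
      rw [degree_eq_natDegree (ih _).1.ne_zero, (ih _).2]
      have := Finset.mem_range.mp ht
      have hlt : d - (t + 1) < d := by omega
      exact WithBot.coe_lt_coe.mpr hlt
    rw [key]
    refine ⟨(ih d).1.add_of_right hlt, ?_⟩
    rw [natDegree_add_eq_right_of_degree_lt hlt, (ih d).2]

/-- Adjoining a root `z` of the monic polynomial `h_{d+1}(l, X)` gives an extension in which
`1, z, …, z^d` are part of a basis; only the independence of `z^d` is recorded. -/
theorem exists_extension {A : Type} [CommRing A] [Nontrivial A] (l : List A) (d : ℕ) :
    ∃ (B : Type) (_ : CommRing B) (_ : Nontrivial B) (ι : A →+* B) (z : B),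
      completeHomog (l.map ι ++ [z]) (d + 1) = 0 ∧ ∀ a, a ≠ 0 → ι a * z ^ d ≠ 0 := by
  obtain ⟨hm, hd⟩ := completeHomog_monic l (d + 1)
  set p := completeHomog (l.map Polynomial.C ++ [Polynomial.X]) (d + 1) with hp
  have hne : ∀ a, a ≠ 0 → AdjoinRoot.of p a * AdjoinRoot.root p ^ d ≠ 0 := by
    intro a ha
    rw [← AdjoinRoot.mk_C, ← AdjoinRoot.mk_X, ← map_pow, ← map_mul, Ne, AdjoinRoot.mk_eq_zero]
    refine hm.not_dvd_of_natDegree_lt ?_ ?_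
    · rwa [Ne, Polynomial.C_mul_X_pow_eq_monomial, Polynomial.monomial_eq_zero_iff]
    · rw [hd]
      exact (Polynomial.natDegree_C_mul_X_pow_le a d).trans_lt (Nat.lt_succ_self d)
  refine ⟨AdjoinRoot p, inferInstance, ⟨_, _, hne 1 one_ne_zero⟩, AdjoinRoot.of p,
    AdjoinRoot.root p, ?_, hne⟩
  have h := map_completeHomog (AdjoinRoot.mk p) (l.map Polynomial.C ++ [Polynomial.X]) (d + 1)
  rw [← hp, AdjoinRoot.mk_self] at h
  rw [h]
  simp [Function.comp_def]

theorem flagIdeal_le_ker {B : Type} [CommRing B] (m : ℕ)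
    (f : MvPolynomial (Fin 3) (ZMod 2) →+* B)
    (h1 : completeHomog [f (.X 0)] (m + 3) = 0)
    (h2 : completeHomog [f (.X 0), f (.X 1)] (m + 2) = 0)
    (h3 : completeHomog [f (.X 0), f (.X 1), f (.X 2)] (m + 1) = 0) :
    flagIdeal 3 m ≤ RingHom.ker f := by
  refine Ideal.span_le.mpr ?_
  rintro p ⟨i, hi, hi3, rfl⟩
  rw [SetLike.mem_coe, RingHom.mem_ker, map_completeHomog]
  have : List.finRange 3 = [0, 1, 2] := rfl
  interval_cases i <;> simpa [this]

theorem mk_completeHomog_eq_zero (m i : ℕ) (h1 : 1 ≤ i) (h3 : i ≤ 3) :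
    completeHomog (((List.finRange 3).take (3 + 1 - i)).map (xGen 3 m)) (m + i) = 0 := by
  have h : Ideal.Quotient.mk (flagIdeal 3 m) (completeHomog
      (((List.finRange 3).take (3 + 1 - i)).map MvPolynomial.X) (m + i)) = 0 :=
    Ideal.Quotient.eq_zero_iff_mem.mpr (Ideal.subset_span ⟨i, h1, h3, rfl⟩)
  rw [map_completeHomog, List.map_map] at h
  exact h

/-- The top monomial survives in a tower of three monic extensions, to which `R(3, m)` maps. -/
theorem top_ne_zero (m : ℕ) :
    xGen 3 m 0 ^ (m + 2) * xGen 3 m 1 ^ (m + 1) * xGen 3 m 2 ^ m ≠ 0 := by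
  obtain ⟨A₁, _, _, ι₁, x, r1, n1⟩ := exists_extension ([] : List (ZMod 2)) (m + 2)
  obtain ⟨A₂, _, _, ι₂, y, r2, n2⟩ := exists_extension [x] (m + 1)
  obtain ⟨A₃, _, _, ι₃, z, r3, n3⟩ := exists_extension [ι₂ x, y] m
  let f : MvPolynomial (Fin 3) (ZMod 2) →+* A₃ :=
    MvPolynomial.eval₂Hom (ι₃.comp (ι₂.comp ι₁)) ![ι₃ (ι₂ x), ι₃ y, z]
  have f0 : f (.X 0) = ι₃ (ι₂ x) := by simp [f]
  have f1 : f (.X 1) = ι₃ y := by simp [f]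
  have f2 : f (.X 2) = z := by simp [f]
  have hle : flagIdeal 3 m ≤ RingHom.ker f := by
    apply flagIdeal_le_ker
    · have h := congrArg (fun t => ι₃ (ι₂ t)) r1
      simpa [map_completeHomog, f0] using h
    · have h := congrArg ι₃ r2
      simpa [map_completeHomog, f0, f1] using h
    · simpa [f0, f1, f2] using r3
  have h3 := n3 _ (n2 _ (n1 1 one_ne_zero))
  intro h
  apply h3
  have hz := congrArg (Ideal.Quotient.lift (flagIdeal 3 m) f hle) h
  have hl : ∀ j, Ideal.Quotient.lift (flagIdeal 3 m) f hle (xGen 3 m j) = f (.X j) :=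
    fun _ => Ideal.Quotient.lift_mk _ _ _
  simpa only [map_mul, map_pow, map_zero, map_one, one_mul, hl, f0, f1, f2] using hz

/-! ### Tensor powers -/

theorem xT_eq (k m s : ℕ) (i : Fin s) (j : Fin k) :
    xT k m s i j
      = PiTensorProduct.singleAlgHom (R := ZMod 2) (A := fun _ : Fin s => FlagRing k m) i
        (xGen k m j) := by
  simp only [xT, PiTensorProduct.singleAlgHom_apply]
  congr 1
  funext t
  by_cases h : t = i
  · subst h; simp
  · simp [h]

/-- Over a field, the pure tensor `t ⊗ ⋯ ⊗ t` is nonzero if `t` is; it is written here as the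
product of the images of `t` under the coordinate embeddings. -/
theorem prod_single_ne_zero (k m s : ℕ) {t : FlagRing k m} (ht : t ≠ 0) :
    ∏ i : Fin s, PiTensorProduct.singleAlgHom (R := ZMod 2) (A := fun _ : Fin s => FlagRing k m) i t
      ≠ 0 := by
  obtain ⟨φ, hφ⟩ : ∃ φ : Module.Dual (ZMod 2) (FlagRing k m), φ t ≠ 0 := by
    by_contra! h
    exact ht ((Module.forall_dual_apply_eq_zero_iff (ZMod 2) t).mp h)
  have hprod : ∏ i : Fin s,
      PiTensorProduct.singleAlgHom (R := ZMod 2) (A := fun _ : Fin s => FlagRing k m) i t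
      = PiTensorProduct.tprod (ZMod 2) (fun _ : Fin s => t) := by
    simp only [PiTensorProduct.singleAlgHom_apply]
    rw [← PiTensorProduct.tprod_prod]
    congr 1
    exact Finset.univ_prod_mulSingle (fun _ : Fin s => t)
  rw [hprod]
  intro h
  have hz := congrArg (PiTensorProduct.lift
    ((MultilinearMap.mkPiAlgebra (ZMod 2) (Fin s) (ZMod 2)).compLinearMap (fun _ => φ))) h
  rw [PiTensorProduct.lift.tprod, map_zero] at hz
  simp [hφ] at hz

theorem two_eq_zero_flagRing (k m : ℕ) : (2 : FlagRing k m) = 0 := by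
  have := map_ofNat (algebraMap (ZMod 2) (FlagRing k m)) 2
  rw [← this, show (OfNat.ofNat 2 : ZMod 2) = 0 from rfl, map_zero]

theorem flagRel_xGen (r : ℕ) :
    FlagRel r (xGen 3 (r + 1) 0) (xGen 3 (r + 1) 1) (xGen 3 (r + 1) 2) := by
  exact flagRel_of_completeHomog (two_eq_zero_flagRing 3 (r + 1)) r _ _ _
    (mk_completeHomog_eq_zero (r + 1) 3 (by norm_num) le_rfl)
    (mk_completeHomog_eq_zero (r + 1) 2 (by norm_num) (by norm_num))
    (mk_completeHomog_eq_zero (r + 1) 1 le_rfl (by norm_num))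

/-- For every `s ≥ 3`, with `q = r + 3 = 2^e`, the product of all blocks is the product of the top
monomials: the first two blocks give the top monomial in the first three factors, and since each
`x_{1,j}` annihilates it, `z_{i,j}` acts on it as `x_{i,j}`. -/
theorem FlagRel.block_product_eq {A : Type*} [CommRing A] (h2 : (2 : A) = 0) {s e r : ℕ}
    (hs : 3 ≤ s) (hr : r + 3 = 2 ^ e) (hodd : Even (r + 1)) {x : Fin s → Fin 3 → A}
    (rel : ∀ i, FlagRel r (x i 0) (x i 1) (x i 2)) :
    ((x ⟨0, by omega⟩ 0 + x ⟨1, by omega⟩ 0) ^ (2 * r + 5) *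
          (x ⟨0, by omega⟩ 1 + x ⟨1, by omega⟩ 1) ^ (2 * r + 4) *
          (x ⟨0, by omega⟩ 2 + x ⟨1, by omega⟩ 2) ^ (r + 2)) *
        ((x ⟨0, by omega⟩ 0 + x ⟨2, by omega⟩ 0) ^ (r + 2) *
          (x ⟨0, by omega⟩ 1 + x ⟨2, by omega⟩ 1) ^ (r + 2) *
          (x ⟨0, by omega⟩ 2 + x ⟨2, by omega⟩ 2) ^ (2 * r + 3)) *
        ∏ i ∈ Finset.univ.filter (fun i : Fin s => 3 ≤ i.val),
          ((x ⟨0, by omega⟩ 0 + x i 0) ^ (r + 3) *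
            (x ⟨0, by omega⟩ 1 + x i 1) ^ (r + 2) *
            (x ⟨0, by omega⟩ 2 + x i 2) ^ (r + 1)) =
      ∏ i : Fin s, (x i 0 ^ (r + 3) * x i 1 ^ (r + 2) * x i 2 ^ (r + 1)) := by
  rw [first_blocks_eq h2 hr hodd (rel _) (rel _) (rel _)]
  set o : Fin s := ⟨0, by omega⟩ with ho
  set T : Fin s → A :=
    fun i => x i 0 ^ (r + 3) * x i 1 ^ (r + 2) * x i 2 ^ (r + 1) with hT
  have k0 : T o * x o 0 = 0 := by
    simp only [hT]
    linear_combination x o 1 ^ (r + 2) * x o 2 ^ (r + 1) * (rel o).x_pow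
  have k1 : T o * x o 1 = 0 := by
    simp only [hT]
    linear_combination x o 2 ^ (r + 1) * (rel o).xy
  have k2 : T o * x o 2 = 0 := by
    simp only [hT]
    linear_combination (rel o).xyz
  have absorb : ∀ i, T o * ((x o 0 + x i 0) ^ (r + 3) * (x o 1 + x i 1) ^ (r + 2) *
      (x o 2 + x i 2) ^ (r + 1)) = T o * T i := by
    intro i
    simp only [hT] at k0 k1 k2 ⊢
    linear_combination
      (x o 1 + x i 1) ^ (r + 2) * (x o 2 + x i 2) ^ (r + 1) *
        mul_add_pow_of_mul_eq_zero k0 (x i 0) (r + 3)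
      + x i 0 ^ (r + 3) * (x o 2 + x i 2) ^ (r + 1) *
        mul_add_pow_of_mul_eq_zero k1 (x i 1) (r + 2)
      + x i 0 ^ (r + 3) * x i 1 ^ (r + 2) * mul_add_pow_of_mul_eq_zero k2 (x i 2) (r + 1)
  have absorb_prod : ∀ S : Finset (Fin s),
      T o * ∏ i ∈ S, ((x o 0 + x i 0) ^ (r + 3) * (x o 1 + x i 1) ^ (r + 2) *
        (x o 2 + x i 2) ^ (r + 1)) = T o * ∏ i ∈ S, T i := by
    intro S
    induction S using Finset.induction_on with
    | empty => rfl
    | insert i S hi ih =>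
      rw [Finset.prod_insert hi, Finset.prod_insert hi, ← mul_assoc, absorb i]
      linear_combination T i * ih
  have hsplit : (Finset.univ.filter fun i : Fin s => ¬ 3 ≤ i.val)
      = {o, ⟨1, by omega⟩, ⟨2, by omega⟩} := by
    ext i
    simp only [Finset.mem_filter, Finset.mem_univ, true_and, Finset.mem_insert,
      Finset.mem_singleton, Fin.ext_iff, ho]
    omega
  rw [← Finset.prod_filter_mul_prod_filter_not Finset.univ (fun i : Fin s => 3 ≤ i.val) T,
    hsplit, Finset.prod_insert (by simp [ho, Fin.ext_iff]),
    Finset.prod_insert (by simp [Fin.ext_iff]), Finset.prod_singleton]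
  change T o * T ⟨1, by omega⟩ * T ⟨2, by omega⟩ * _ = _
  linear_combination T ⟨1, by omega⟩ * T ⟨2, by omega⟩ *
    absorb_prod (Finset.univ.filter fun i : Fin s => 3 ≤ i.val)

/-- for `s ≥ 3` and `e ≥ 2`, in `R(3, 2^e-2)^{⊗s}` the element
`(z_{2,1}^{2^{e+1}-1} z_{2,2}^{2^{e+1}-2} z_{2,3}^{2^e-1}) ·
(z_{3,1}^{2^e-1} z_{3,2}^{2^e-1} z_{3,3}^{2^{e+1}-3}) ·
∏_{i=4}^{s} (z_{i,1}^{2^e} z_{i,2}^{2^e-1} z_{i,3}^{2^e-2})` is nonzero; moreover for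
`s = 3` it equals the top basis element `∏_{i=1}^{3} x_{i,1}^{2^e} x_{i,2}^{2^e-1} x_{i,3}^{2^e-2}`. -/
theorem statement18 (s e : ℕ) (hs : 3 ≤ s) (he : 2 ≤ e) :
    ((zT 3 (2 ^ e - 2) s (by omega) ⟨1, by omega⟩ 0 ^ (2 ^ (e + 1) - 1) *
          zT 3 (2 ^ e - 2) s (by omega) ⟨1, by omega⟩ 1 ^ (2 ^ (e + 1) - 2) *
          zT 3 (2 ^ e - 2) s (by omega) ⟨1, by omega⟩ 2 ^ (2 ^ e - 1)) *
        (zT 3 (2 ^ e - 2) s (by omega) ⟨2, by omega⟩ 0 ^ (2 ^ e - 1) *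
          zT 3 (2 ^ e - 2) s (by omega) ⟨2, by omega⟩ 1 ^ (2 ^ e - 1) *
          zT 3 (2 ^ e - 2) s (by omega) ⟨2, by omega⟩ 2 ^ (2 ^ (e + 1) - 3)) *
        ∏ i ∈ Finset.univ.filter (fun i : Fin s => 3 ≤ i.val),
          (zT 3 (2 ^ e - 2) s (by omega) i 0 ^ (2 ^ e) *
            zT 3 (2 ^ e - 2) s (by omega) i 1 ^ (2 ^ e - 1) *
            zT 3 (2 ^ e - 2) s (by omega) i 2 ^ (2 ^ e - 2)) ≠ 0) ∧
    (s = 3 →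
      (zT 3 (2 ^ e - 2) s (by omega) ⟨1, by omega⟩ 0 ^ (2 ^ (e + 1) - 1) *
          zT 3 (2 ^ e - 2) s (by omega) ⟨1, by omega⟩ 1 ^ (2 ^ (e + 1) - 2) *
          zT 3 (2 ^ e - 2) s (by omega) ⟨1, by omega⟩ 2 ^ (2 ^ e - 1)) *
        (zT 3 (2 ^ e - 2) s (by omega) ⟨2, by omega⟩ 0 ^ (2 ^ e - 1) *
          zT 3 (2 ^ e - 2) s (by omega) ⟨2, by omega⟩ 1 ^ (2 ^ e - 1) *
          zT 3 (2 ^ e - 2) s (by omega) ⟨2, by omega⟩ 2 ^ (2 ^ (e + 1) - 3)) *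
        ∏ i ∈ Finset.univ.filter (fun i : Fin s => 3 ≤ i.val),
          (zT 3 (2 ^ e - 2) s (by omega) i 0 ^ (2 ^ e) *
            zT 3 (2 ^ e - 2) s (by omega) i 1 ^ (2 ^ e - 1) *
            zT 3 (2 ^ e - 2) s (by omega) i 2 ^ (2 ^ e - 2)) =
      ∏ i : Fin s,
        (xT 3 (2 ^ e - 2) s i 0 ^ (2 ^ e) *
          xT 3 (2 ^ e - 2) s i 1 ^ (2 ^ e - 1) *
          xT 3 (2 ^ e - 2) s i 2 ^ (2 ^ e - 2))) := by
  have hq : 4 ≤ 2 ^ e := (by norm_num : 4 = 2 ^ 2) ▸ Nat.pow_le_pow_right (by norm_num) he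
  obtain ⟨r, hr⟩ : ∃ r, 2 ^ e = r + 3 := ⟨2 ^ e - 3, by omega⟩
  have hodd : Even (r + 1) := by
    have h2e : Even (2 ^ e) := (even_two).pow_of_ne_zero (by omega)
    rw [hr] at h2e
    grind
  have e1 : 2 ^ e - 2 = r + 1 := by omega
  have e2 : 2 ^ (e + 1) - 1 = 2 * r + 5 := by rw [pow_succ]; omega
  have e3 : 2 ^ (e + 1) - 2 = 2 * r + 4 := by rw [pow_succ]; omega
  have e4 : 2 ^ (e + 1) - 3 = 2 * r + 3 := by rw [pow_succ]; omega
  have e5 : 2 ^ e - 1 = r + 2 := by omega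
  have h2 : (2 : ⨂[ZMod 2] _ : Fin s, FlagRing 3 (r + 1)) = 0 := by
    have := map_ofNat (PiTensorProduct.singleAlgHom (R := ZMod 2)
      (A := fun _ : Fin s => FlagRing 3 (r + 1)) ⟨0, by omega⟩) 2
    rw [← this, two_eq_zero_flagRing, map_zero]
  have rel : ∀ i : Fin s, FlagRel r (xT 3 (r + 1) s i 0) (xT 3 (r + 1) s i 1)
      (xT 3 (r + 1) s i 2) := by
    intro i
    simp only [xT_eq]
    exact FlagRel.map (B := ⨂[ZMod 2] _ : Fin s, FlagRing 3 (r + 1))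
      (PiTensorProduct.singleAlgHom (R := ZMod 2)
        (A := fun _ : Fin s => FlagRing 3 (r + 1)) i).toRingHom (flagRel_xGen r)
  have main := FlagRel.block_product_eq h2 hs hr.symm hodd rel
  have hne := prod_single_ne_zero 3 (r + 1) s (top_ne_zero (r + 1))
  simp only [map_mul, map_pow, ← xT_eq] at hne
  generalize 2 ^ e - 2 = m at e1 ⊢
  generalize 2 ^ (e + 1) - 1 = n₁ at e2 ⊢
  generalize 2 ^ (e + 1) - 2 = n₂ at e3 ⊢
  generalize 2 ^ (e + 1) - 3 = n₃ at e4 ⊢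
  generalize 2 ^ e - 1 = n₄ at e5 ⊢
  subst e1 e2 e3 e4 e5
  rw [hr]
  exact ⟨fun h => hne (main.symm.trans h), fun _ => main⟩
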